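/- In the setting above, define the star product on Symb•[h] by a ⋆ b := Σ_{k=0}^{n+m} hᵏ [qⁿ(a) ∘ qᵐ(b)]^{n+m−k} for a ∈ Symbⁿ, b ∈ Symbᵐ, extended k[h]-bilinearly, where [·]ʲ = ζʲ(⌊·⌋ʲ) are truncated symbols. Then q_h(a ⋆ b) = q_h(a) ∘ q_h(b), where ∘ denotes the k[h]-bilinear extension of composition of differential operators. -/

import Mathlib

/-!
Statement 2 (Proposition 5.20(iii)): with an increasing filtration `Diffⁿ(E,F)` of
k-submodules of `Hom_k(E,F)`, symbol quotients `Symbⁿ = Diffⁿ/Diffⁿ⁻¹` with projections `ζⁿ`,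
and k-linear sections `qⁿ` of `ζⁿ`, the k-truncation `⌊Δ⌋ᵏ` of any `Δ ∈ Diffⁿ`
lies in `Diffᵏ` for every `k`.
-/

open Submodule
open scoped Classical DirectSum

variable {R : Type*} [CommRing R]

/-- `Diff⁻¹ := 0`; `Dprev D n` is `Diffⁿ⁻¹`. -/
def Dprev {M : Type*} [AddCommGroup M] [Module R M] (D : ℕ → Submodule R M) :
    ℕ → Submodule R M
  | 0 => ⊥
  | n + 1 => D n

/-- `Diffⁿ⁻¹` viewed as a submodule of `Diffⁿ`. -/
def Nsub {M : Type*} [AddCommGroup M] [Module R M] (D : ℕ → Submodule R M) (n : ℕ) :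
    Submodule R (D n) := (Dprev D n).comap (D n).subtype

/-- The symbol module `Symbⁿ := Diffⁿ/Diffⁿ⁻¹`; the symbol map `ζⁿ` is the quotient
projection `Submodule.Quotient.mk`. -/
abbrev Symb {M : Type*} [AddCommGroup M] [Module R M] (D : ℕ → Submodule R M) (n : ℕ) :=
  D n ⧸ Nsub D n

/-- The k-truncation `⌊Δ⌋ᵏ` of `Δ` regarded as a differential operator of order at most `n`:
`⌊Δ⌋ᵏ = Δ` for `k ≥ n` and `⌊Δ⌋ᵏ = ⌊Δ⌋ᵏ⁺¹ − qᵏ⁺¹(ζᵏ⁺¹(⌊Δ⌋ᵏ⁺¹))` for `k < n`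
(the inner `dite` is always taken in its first branch, by Proposition 5.20(iii)). -/
noncomputable def trunc {M : Type*} [AddCommGroup M] [Module R M] (D : ℕ → Submodule R M)
    (q : (n : ℕ) → Symb D n →ₗ[R] D n) (n : ℕ) (Δ : M) (k : ℕ) : M :=
  if n ≤ k then Δ
  else
    let t := trunc D q n Δ (k + 1)
    if h : t ∈ D (k + 1) then
      t - ((q (k + 1) (Submodule.Quotient.mk ⟨t, h⟩) : D (k + 1)) : M)
    else t
  termination_by n - k
  decreasing_by omega

/-- The truncated symbol `[Δ]ᵏ := ζᵏ(⌊Δ⌋ᵏ) ∈ Symbᵏ` (where `Δ` is regarded as an operator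
of order at most `n`); the `dite` is always taken in its first branch by Proposition 5.20(iii). -/
noncomputable def symbTrunc {M : Type*} [AddCommGroup M] [Module R M] (D : ℕ → Submodule R M)
    (q : (n : ℕ) → Symb D n →ₗ[R] D n) (n : ℕ) (Δ : M) (k : ℕ) : Symb D k :=
  if h : trunc D q n Δ k ∈ D k then
    (Submodule.Quotient.mk (⟨trunc D q n Δ k, h⟩ : D k) : Symb D k)
  else 0


variable {A : Type*} [Ring A] [Algebra R A]

/-- The formal h-deformed quantization `q_h : Symb•[h] → Diff[h]`, modelling `M[h] = M ⊗ k[h]`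
as `ℕ →₀ M` (the coefficient of `hⁱ` sitting in degree `i`):
`q_h(hⁱ σ) = hⁱ⁺ⁿ qⁿ(σ)` for `σ ∈ Symbⁿ`, extended k[h]-linearly. -/
noncomputable def qhF (D : ℕ → Submodule R A) (q : (n : ℕ) → Symb D n →ₗ[R] D n)
    (f : ℕ →₀ (⨁ n, Symb D n)) : ℕ →₀ A :=
  f.sum fun i x => x.sum fun n σ => Finsupp.single (i + n) ((q n σ : A))

/-- The convolution product on `Diff[h] = ℕ →₀ Diff`: the k[h]-bilinear extension of the
composition (multiplication) of differential operators. -/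
noncomputable def convMul (f g : ℕ →₀ A) : ℕ →₀ A :=
  f.sum fun i a => g.sum fun j b => Finsupp.single (i + j) (a * b)

/-- The formal star product `⋆` on `Symb•[h] = ℕ →₀ ⊕ⱼ Symbʲ`:
for `a ∈ Symbⁿ`, `b ∈ Symbᵐ`, `a ⋆ b := Σ_{k=0}^{n+m} hᵏ [qⁿ(a) ∘ qᵐ(b)]^{n+m−k}`,
extended k[h]-bilinearly. -/
noncomputable def starF (D : ℕ → Submodule R A) (q : (n : ℕ) → Symb D n →ₗ[R] D n)
    (x y : ℕ →₀ (⨁ n, Symb D n)) : ℕ →₀ (⨁ n, Symb D n) :=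
  x.sum fun i a => y.sum fun i' b =>
    a.sum fun n σ => b.sum fun m τ =>
      (Finset.range (n + m + 1)).sum fun k =>
        Finsupp.single (i + i' + k)
          (DirectSum.of (fun j => Symb D j) (n + m - k)
            (symbTrunc D q (n + m) ((q n σ : A) * (q m τ : A)) (n + m - k)))

/-!
Descending from `⌊Δ⌋ⁿ = Δ`, each truncation step removes exactly `qᵏ([Δ]ᵏ)`, and after the step at
`k = 0` the remainder lies in `Diff⁻¹ = 0`. Hence `Δ = Σₖ qᵏ([Δ]ᵏ)` for `Δ ∈ Diffⁿ`. Since `q_h`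
contributes `hⁿ⁻ᵏ` on `Symbⁿ⁻ᵏ`, every term of `Σₖ hᵏ [Δ]ⁿ⁻ᵏ` is sent to degree `n` in `h`, so `q_h`
takes this sum to `hⁿ Δ`. With `Δ = qⁿ(a) ∘ qᵐ(b)` this is the claim on homogeneous symbols, and
both sides are sums over the homogeneous components.
-/

/-- A full quantization: a family of sections `qⁿ : Symbⁿ → Diffⁿ` of the symbol maps `ζⁿ`. -/
def IsFullQuantization {M : Type*} [AddCommGroup M] [Module R M] {D : ℕ → Submodule R M}
    (q : (n : ℕ) → Symb D n →ₗ[R] D n) : Prop :=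
  ∀ (n : ℕ) (σ : Symb D n), (Submodule.Quotient.mk (q n σ) : Symb D n) = σ

section Truncation

variable {M : Type*} [AddCommGroup M] [Module R M] {D : ℕ → Submodule R M}
  {q : (n : ℕ) → Symb D n →ₗ[R] D n} {n k : ℕ} {Δ : M}

theorem trunc_of_le (h : n ≤ k) (Δ : M) : trunc D q n Δ k = Δ := by
  rw [trunc, if_pos h]

theorem symbTrunc_of_mem (h : trunc D q n Δ k ∈ D k) :
    symbTrunc D q n Δ k = Submodule.Quotient.mk ⟨trunc D q n Δ k, h⟩ :=
  dif_pos h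

theorem trunc_of_lt (hk : k < n) (h : trunc D q n Δ (k + 1) ∈ D (k + 1)) :
    trunc D q n Δ k = trunc D q n Δ (k + 1) - q (k + 1) (symbTrunc D q n Δ (k + 1)) := by
  rw [trunc, if_neg hk.not_ge, symbTrunc_of_mem h]
  exact dif_pos h

namespace IsFullQuantization

theorem sub_mk_mem_Dprev (hq : IsFullQuantization q) (t : D n) :
    (t : M) - q n (Submodule.Quotient.mk t) ∈ Dprev D n :=
  (Submodule.Quotient.eq (Nsub D n)).1 (hq n _).symm

theorem trunc_mem (hq : IsFullQuantization q) (hk : k ≤ n) (hΔ : Δ ∈ D n) :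
    trunc D q n Δ k ∈ D k := by
  induction hk using Nat.decreasingInduction with
  | self => rwa [trunc_of_le le_rfl]
  | of_succ k hk ih =>
    rw [trunc_of_lt hk ih, symbTrunc_of_mem ih]
    exact hq.sub_mk_mem_Dprev ⟨_, ih⟩

theorem apply_symbTrunc_zero (hq : IsFullQuantization q) (hΔ : Δ ∈ D n) :
    (q 0 (symbTrunc D q n Δ 0) : M) = trunc D q n Δ 0 := by
  have hmem : trunc D q n Δ 0 ∈ D 0 := hq.trunc_mem n.zero_le hΔ
  have hdiff : trunc D q n Δ 0 - q 0 (symbTrunc D q n Δ 0) ∈ (⊥ : Submodule R M) := by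
    rw [symbTrunc_of_mem hmem]
    exact hq.sub_mk_mem_Dprev ⟨_, hmem⟩
  exact (sub_eq_zero.1 ((Submodule.mem_bot R).1 hdiff)).symm

theorem sum_apply_symbTrunc_eq_trunc (hq : IsFullQuantization q) (hk : k ≤ n) (hΔ : Δ ∈ D n) :
    ∑ j ∈ Finset.range (k + 1), (q j (symbTrunc D q n Δ j) : M) = trunc D q n Δ k := by
  induction k with
  | zero => rw [Finset.sum_range_one, hq.apply_symbTrunc_zero hΔ]
  | succ k ih =>
    rw [Finset.sum_range_succ, ih (Nat.le_of_succ_le hk),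
      trunc_of_lt hk (hq.trunc_mem hk hΔ), sub_add_cancel]

theorem sum_apply_symbTrunc (hq : IsFullQuantization q) (hΔ : Δ ∈ D n) :
    ∑ j ∈ Finset.range (n + 1), (q j (symbTrunc D q n Δ j) : M) = Δ := by
  rw [hq.sum_apply_symbTrunc_eq_trunc le_rfl hΔ, trunc_of_le le_rfl]

end IsFullQuantization

end Truncation

theorem ofCoeff_convMul (f g : ℕ →₀ A) :
    AddMonoidAlgebra.ofCoeff (convMul f g) =
      AddMonoidAlgebra.ofCoeff f * AddMonoidAlgebra.ofCoeff g := by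
  simp only [AddMonoidAlgebra.mul_def, convMul, AddMonoidAlgebra.ofCoeff_finsuppSum,
    AddMonoidAlgebra.ofCoeff_single]

section FormalQuantization

variable (D : ℕ → Submodule R A) (q : (n : ℕ) → Symb D n →ₗ[R] D n)

/-- The formal quantization `q_h` as an additive map into `Diff[h]`, realised here as the monoid
algebra of `ℕ` over `A`, so that the composition of `Diff[h]` is the ring multiplication. -/
noncomputable def qhHom : (ℕ →₀ ⨁ n, Symb D n) →+ AddMonoidAlgebra A ℕ :=
  Finsupp.liftAddHom fun i => DirectSum.toAddMonoid fun n =>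
    (AddMonoidAlgebra.singleAddHom (i + n)).comp ((D n).subtype ∘ₗ q n).toAddMonoidHom

theorem qhHom_apply (f : ℕ →₀ ⨁ n, Symb D n) :
    qhHom D q f =
      f.sum fun i x => x.sum fun n σ => AddMonoidAlgebra.single (i + n) (q n σ : A) :=
  Finset.sum_congr rfl fun _ _ => DFinsupp.sumAddHom_apply _ _

theorem qhHom_single_of (i n : ℕ) (σ : Symb D n) :
    qhHom D q (Finsupp.single i (DirectSum.of (fun j => Symb D j) n σ)) =
      AddMonoidAlgebra.single (i + n) (q n σ : A) := by
  rw [qhHom, Finsupp.liftAddHom_apply_single, DirectSum.toAddMonoid_of]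
  rfl

theorem ofCoeff_qhF (f : ℕ →₀ ⨁ n, Symb D n) :
    AddMonoidAlgebra.ofCoeff (qhF D q f) = qhHom D q f := by
  simp only [qhHom_apply, qhF, Finsupp.sum, DFinsupp.sum, AddMonoidAlgebra.ofCoeff_sum,
    AddMonoidAlgebra.ofCoeff_single]

/-- The formal total symbol `hⁱ Σₖ hᵏ [Δ]ⁿ⁻ᵏ` of `Δ`, regarded as an operator of order at most
`n`. For `Δ = qⁿ(σ) ∘ qᵐ(τ)` of order at most `n + m` it is the star product `hⁱ (σ ⋆ τ)`. -/
noncomputable def totalSymbol (i n : ℕ) (Δ : A) : ℕ →₀ ⨁ j, Symb D j :=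
  ∑ k ∈ Finset.range (n + 1), Finsupp.single (i + k)
    (DirectSum.of (fun j => Symb D j) (n - k) (symbTrunc D q n Δ (n - k)))

theorem starF_eq_sum_totalSymbol (x y : ℕ →₀ ⨁ n, Symb D n) :
    starF D q x y = x.sum fun i a => y.sum fun j b => a.sum fun n σ => b.sum fun m τ =>
      totalSymbol D q (i + j) (n + m) ((q n σ : A) * (q m τ : A)) :=
  rfl

variable {D q}

theorem IsFullQuantization.qhHom_totalSymbol (hq : IsFullQuantization q) (i : ℕ) {n : ℕ} {Δ : A}
    (hΔ : Δ ∈ D n) :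
    qhHom D q (totalSymbol D q i n Δ) = AddMonoidAlgebra.single (i + n) Δ := by
  calc
    qhHom D q (totalSymbol D q i n Δ)
    _ = ∑ k ∈ Finset.range (n + 1),
          AddMonoidAlgebra.single (i + n) (q (n - k) (symbTrunc D q n Δ (n - k)) : A) := by
      rw [totalSymbol, map_sum]
      refine Finset.sum_congr rfl fun k hk => ?_
      have hdegree : i + k + (n - k) = i + n := by grind
      rw [qhHom_single_of, hdegree]
    _ = ∑ j ∈ Finset.range (n + 1),
          AddMonoidAlgebra.single (i + n) (q j (symbTrunc D q n Δ j) : A) :=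
      Finset.sum_range_reflect
        (fun j => AddMonoidAlgebra.single (i + n) (q j (symbTrunc D q n Δ j) : A)) (n + 1)
    _ = AddMonoidAlgebra.single (i + n) Δ := by
      conv_rhs => rw [← hq.sum_apply_symbTrunc hΔ]
      exact (map_sum (AddMonoidAlgebra.singleAddHom (i + n)) _ _).symm

theorem IsFullQuantization.qhHom_starF (hq : IsFullQuantization q)
    (hmul : ∀ ⦃n m : ℕ⦄ ⦃x y : A⦄, x ∈ D n → y ∈ D m → x * y ∈ D (n + m))
    (x y : ℕ →₀ ⨁ n, Symb D n) :
    qhHom D q (starF D q x y) = qhHom D q x * qhHom D q y := by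
  have hmonomial (i j n m : ℕ) (σ : Symb D n) (τ : Symb D m) :
      qhHom D q (totalSymbol D q (i + j) (n + m) ((q n σ : A) * (q m τ : A))) =
        AddMonoidAlgebra.single (i + n) (q n σ : A) *
          AddMonoidAlgebra.single (j + m) (q m τ : A) := by
    rw [hq.qhHom_totalSymbol _ (hmul (q n σ).2 (q m τ).2), AddMonoidAlgebra.single_mul_single,
      add_add_add_comm]
  simp only [starF_eq_sum_totalSymbol, Finsupp.sum, DFinsupp.sum, map_sum, hmonomial,
    qhHom_apply, Finset.sum_mul_sum]

end FormalQuantization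

theorem statement_8_general (D : ℕ → Submodule R A)
    (hmul : ∀ ⦃n m : ℕ⦄ ⦃x y : A⦄, x ∈ D n → y ∈ D m → x * y ∈ D (n + m))
    (q : (n : ℕ) → Symb D n →ₗ[R] D n) (hq : IsFullQuantization q) (x y : ℕ →₀ ⨁ n, Symb D n) :
    qhF D q (starF D q x y) = convMul (qhF D q x) (qhF D q y) := by
  apply AddMonoidAlgebra.ofCoeff_injective
  rw [ofCoeff_convMul, ofCoeff_qhF, ofCoeff_qhF, ofCoeff_qhF, hq.qhHom_starF hmul]

/-!
Statement 8 (Lemma 5.31(ii)): `q_h(a ⋆ b) = q_h(a) ∘ q_h(b)`, where `⋆` is the formal star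
product (`a ⋆ b = Σ_{k=0}^{n+m} hᵏ [qⁿ(a)∘qᵐ(b)]^{n+m−k}` on homogeneous symbols, extended
k[h]-bilinearly) and `∘` is the k[h]-bilinear extension (convolution) of composition of
differential operators.
-/
theorem statement_8 (D : ℕ → Submodule R A) (hmono : Monotone D)
    (hone : (1 : A) ∈ D 0)
    (hmul : ∀ ⦃n m : ℕ⦄ ⦃x y : A⦄, x ∈ D n → y ∈ D m → x * y ∈ D (n + m))
    (q : (n : ℕ) → Symb D n →ₗ[R] D n)
    (hq : ∀ (n : ℕ) (σ : Symb D n), (Submodule.Quotient.mk (q n σ) : Symb D n) = σ) :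
    ∀ x y : ℕ →₀ (⨁ n, Symb D n),
      qhF D q (starF D q x y) = convMul (qhF D q x) (qhF D q y) :=
  statement_8_general D hmul q hq
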